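/- Let F be a field complete with respect to a nonarchimedean absolute value (e.g. Q_ℓ), let V be a finite-dimensional F-vector space of dimension d, and let x₀ ∈ End(V) be such that the F-subalgebra F[x₀] generated by x₀ is a field of degree d over F. Then there is an open neighborhood U of x₀ in End(V) (with its natural topology) such that for every x ∈ U, the subalgebra F[x] is a field of degree d over F. -/

import Mathlib

open Polynomial Filter Topology

/-- Monic polynomials of a fixed degree `m`, smaller than the degree of `α`, take values at `α`
that are bounded away from zero. -/
lemma exists_pos_le_norm_aeval_of_monic {F L : Type*} [NontriviallyNormedField F] [CompleteSpace F]
    [NormedField L] [NormedAlgebra F L] {α : L} {m : ℕ} (hm : m < (minpoly F α).natDegree) :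
    ∃ δ > 0, ∀ g : F[X], g.Monic → g.natDegree = m → δ ≤ ‖aeval α g‖ := by
  set W : Submodule F L := (degreeLT F m).map (aeval α).toLinearMap
  have : FiniteDimensional F (degreeLT F m) := (degreeLTEquiv F m).symm.finiteDimensional
  have hW : IsClosed (W : Set L) := W.closed_of_finiteDimensional
  have aeval_ne_zero {g : F[X]} (hg : g.Monic) (hgm : g.natDegree = m) : aeval α g ≠ 0 := by
    intro h0
    have := natDegree_le_of_dvd (minpoly.dvd F α h0) hg.ne_zero
    omega
  have hmem {g : F[X]} (hg : g.Monic) (hgm : g.natDegree = m) : α ^ m - aeval α g ∈ W := by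
    refine ⟨X ^ m - g, ?_, by simp⟩
    rw [SetLike.mem_coe, mem_degreeLT]
    have hd : (X ^ m : F[X]).degree = g.degree := by
      rw [degree_X_pow, degree_eq_natDegree hg.ne_zero, hgm]
    simpa using degree_sub_lt_left hd (monic_X_pow m).ne_zero (by simp [hg.leadingCoeff])
  have hα : α ^ m ∉ W := by
    rintro ⟨q, hq, hqα⟩
    rw [SetLike.mem_coe, mem_degreeLT] at hq
    refine aeval_ne_zero (monic_X_pow_sub hq) ?_ ?_
    · exact natDegree_eq_of_degree_eq_some (by
        rw [degree_sub_eq_left_of_degree_lt (by simpa using hq), degree_X_pow])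
    · simpa [sub_eq_zero] using hqα.symm
  obtain ⟨δ, hδ, hball⟩ := Metric.isOpen_iff.1 hW.isOpen_compl _ hα
  refine ⟨δ, hδ, fun g hg hgm ↦ ?_⟩
  by_contra! hlt
  exact hball (by simpa [dist_eq_norm] using hlt) (hmem hg hgm)

/-- Irreducibility of monic polynomials of fixed degree over a complete nonarchimedean field is an
open condition on the coefficients. -/
lemma eventually_irreducible_of_monic {F T : Type*} [NontriviallyNormedField F]
    [IsUltrametricDist F] [CompleteSpace F] [TopologicalSpace T] {p : T → F[X]} {d : ℕ}
    (hmonic : ∀ t, (p t).Monic) (hdeg : ∀ t, (p t).natDegree = d) {t₀ : T}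
    (hcont : ∀ i, ContinuousAt (fun t ↦ (p t).coeff i) t₀) (hirr : Irreducible (p t₀)) :
    ∀ᶠ t in 𝓝 t₀, Irreducible (p t) := by
  have : Fact (Irreducible (p t₀)) := ⟨hirr⟩
  let L := AdjoinRoot (p t₀)
  have : FiniteDimensional F L := (AdjoinRoot.powerBasis hirr.ne_zero).finite
  let : NormedField L := spectralNorm.normedField F L
  let : NormedAlgebra F L := spectralNorm.normedAlgebra F L
  let α : L := AdjoinRoot.root (p t₀)
  have hroot : aeval α (p t₀) = 0 := by simp [α, L]
  have hmin : (minpoly F α).natDegree = d := by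
    rw [← minpoly.eq_of_irreducible_of_monic hirr hroot (hmonic t₀), hdeg]
  have hδ (m : ℕ) : ∃ δ > 0, m < d → ∀ g : F[X], g.Monic → g.natDegree = m → δ ≤ ‖aeval α g‖ := by
    by_cases hm : m < d
    · obtain ⟨δ, hpos, h⟩ := exists_pos_le_norm_aeval_of_monic (hm.trans_eq hmin.symm)
      exact ⟨δ, hpos, fun _ ↦ h⟩
    · exact ⟨1, one_pos, fun h ↦ absurd h hm⟩
  choose δ hpos hδ using hδ
  have hlim : Tendsto (fun t ↦ ‖aeval α (p t)‖) (𝓝 t₀) (𝓝 0) := by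
    have hsum (t : T) : aeval α (p t) = ∑ i ∈ Finset.range (d + 1), (p t).coeff i • α ^ i := by
      rw [aeval_eq_sum_range, hdeg]
    have h : ContinuousAt (fun t ↦ aeval α (p t)) t₀ := by
      simp only [hsum]
      exact tendsto_finsetSum _ fun i _ ↦ (hcont i).tendsto.smul_const (α ^ i)
    simpa [ContinuousAt, hroot] using h.norm
  have hev : ∀ᶠ t in 𝓝 t₀, ∀ m ∈ Finset.range d, ‖aeval α (p t)‖ < δ m * δ (d - m) :=
    (eventually_all_finset _).2 fun m _ ↦
      hlim.eventually_lt_const (mul_pos (hpos m) (hpos (d - m)))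
  filter_upwards [hev] with t ht
  have hd : d ≠ 0 := by
    rw [← hdeg t₀]
    exact hirr.natDegree_pos.ne'
  refine ((hmonic t).irreducible_iff_natDegree).2 ⟨?_, fun g h hg hh hgh ↦ ?_⟩
  · intro h1
    exact hd (by rw [← hdeg t, h1, natDegree_one])
  · by_contra! hne
    have hadd : g.natDegree + h.natDegree = d := by rw [← hdeg t, ← hgh, hg.natDegree_mul hh]
    have hgd : g.natDegree < d := by omega
    have hlt := ht _ (Finset.mem_range.2 hgd)
    rw [← hgh, map_mul, norm_mul] at hlt
    refine hlt.not_ge (mul_le_mul (hδ _ hgd g hg rfl) (hδ _ (by omega) h hh (by omega))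
      (hpos _).le (norm_nonneg _))

/-- The coefficients of the characteristic polynomial are continuous functions of the
endomorphism. -/
lemma continuous_charpoly_coeff {F V : Type*} [NontriviallyNormedField F] [CompleteSpace F]
    [NormedAddCommGroup V] [NormedSpace F V] [FiniteDimensional F V] (i : ℕ) :
    Continuous fun x : V →L[F] V ↦ (x : V →ₗ[F] V).charpoly.coeff i := by
  let b := Module.finBasis F V
  have h (x : V →L[F] V) : (x : V →ₗ[F] V).charpoly.coeff i =
      MvPolynomial.eval (fun jk ↦ b.repr (x (b jk.2)) jk.1)
        ((Matrix.charpoly.univ F (Fin (Module.finrank F V))).coeff i) := by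
    rw [← LinearMap.charpoly_toMatrix _ b]
    refine ((Matrix.charpoly.univ_coeff_eval₂Hom _ (RingHom.id F) _ i).trans ?_).symm
    congr 2
    ext j k
    simp [LinearMap.toMatrix_apply]
  simp only [h]
  refine (MvPolynomial.continuous_eval _).comp (continuous_pi fun jk ↦ ?_)
  exact (LinearMap.continuous_of_finiteDimensional (b.coord jk.1)).comp
    (ContinuousLinearMap.apply F V (b jk.2)).continuous

/-- The algebra generated by an element `x` is the quotient of the polynomial ring by the minimal
polynomial of `x`. -/
noncomputable def adjoinSingletonEquivAdjoinRoot {F A : Type*} [Field F] [Ring A] [Algebra F A]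
    (x : A) : AdjoinRoot (minpoly F x) ≃ₐ[F] Algebra.adjoin F {x} :=
  (Ideal.quotientEquivAlgOfEq F (minpoly.ker_aeval_eq_span_minpoly F x).symm).trans
    ((Ideal.quotientKerEquivRange (aeval (R := F) x)).trans
      (Subalgebra.equivOfEq _ _ (Algebra.adjoin_singleton_eq_range_aeval F x).symm))

lemma isField_adjoin_singleton_iff {F A : Type*} [Field F] [Ring A] [Algebra F A] {x : A}
    (hx : IsIntegral F x) :
    IsField (Algebra.adjoin F {x}) ↔ Irreducible (minpoly F x) := by
  rw [← (adjoinSingletonEquivAdjoinRoot x).toMulEquiv.isField_congr]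
  refine ⟨fun h ↦ ?_, fun h ↦ ?_⟩
  · have hmax := (Ideal.Quotient.maximal_ideal_iff_isField_quotient (Ideal.span {minpoly F x})).2 h
    exact ((Ideal.span_singleton_prime (minpoly.ne_zero hx)).1 hmax.isPrime).irreducible
  · have : Fact (Irreducible (minpoly F x)) := ⟨h⟩
    exact Field.toIsField _

lemma finrank_adjoin_singleton {F A : Type*} [Field F] [Ring A] [Algebra F A] {x : A}
    (hx : IsIntegral F x) :
    Module.finrank F (Algebra.adjoin F {x}) = (minpoly F x).natDegree := by
  rw [← (adjoinSingletonEquivAdjoinRoot x).toLinearEquiv.finrank_eq,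
    (AdjoinRoot.powerBasis (minpoly.ne_zero hx)).finrank, AdjoinRoot.powerBasis_dim]

/-- The characteristic polynomial of `x` is irreducible if and only if the minimal polynomial of
`x` is irreducible of degree `dim V`. -/
lemma irreducible_charpoly_iff {F V : Type*} [Field F] [AddCommGroup V] [Module F V]
    [FiniteDimensional F V] (x : Module.End F V) :
    Irreducible x.charpoly ↔ Irreducible (minpoly F x) ∧
      (minpoly F x).natDegree = Module.finrank F V := by
  have hmonic := minpoly.monic (LinearMap.isIntegral x)
  have hdvd := minpoly.dvd F x x.aeval_self_charpoly
  constructor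
  · intro h
    have : Nontrivial V := Module.nontrivial_of_finrank_pos (R := F) (by
      rw [← x.charpoly_natDegree]; exact h.natDegree_pos)
    have heq := minpoly.eq_of_irreducible_of_monic h x.aeval_self_charpoly x.charpoly_monic
    rw [← heq]
    exact ⟨h, x.charpoly_natDegree⟩
  · rintro ⟨h, hdeg⟩
    rwa [eq_of_monic_of_dvd_of_natDegree_le hmonic x.charpoly_monic hdvd
      (by rw [hdeg, x.charpoly_natDegree])]

/-- Let `F` be a complete nonarchimedean field, `V` a finite-dimensional
`F`-vector space of dimension `d`, and `x₀` an endomorphism such that `F[x₀]` is a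
field of degree `d` over `F`.  Then on an open neighborhood of `x₀` in `End(V)`,
every `x` still has `F[x]` a field of degree `d` over `F`. -/
theorem stmt_3 (F : Type*) [NontriviallyNormedField F] [IsUltrametricDist F]
    [CompleteSpace F] (V : Type*) [NormedAddCommGroup V] [NormedSpace F V]
    [FiniteDimensional F V] (d : ℕ) (hd : Module.finrank F V = d)
    (x₀ : V →L[F] V)
    (hfield : IsField (Algebra.adjoin F ({x₀} : Set (V →L[F] V))))
    (hdeg : Module.finrank F (Algebra.adjoin F ({x₀} : Set (V →L[F] V))) = d) :
    ∃ U : Set (V →L[F] V), IsOpen U ∧ x₀ ∈ U ∧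
      ∀ x ∈ U, IsField (Algebra.adjoin F ({x} : Set (V →L[F] V))) ∧
        Module.finrank F (Algebra.adjoin F ({x} : Set (V →L[F] V))) = d := by
  have key (x : V →L[F] V) : IsField (Algebra.adjoin F ({x} : Set (V →L[F] V))) ∧
      Module.finrank F (Algebra.adjoin F ({x} : Set (V →L[F] V))) = d ↔
      Irreducible (x : V →ₗ[F] V).charpoly := by
    have hmin : minpoly F (x : V →ₗ[F] V) = minpoly F x :=
      minpoly.algHom_eq
        ({ ContinuousLinearMap.toLinearMapRingHom with commutes' := fun _ ↦ rfl } :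
          (V →L[F] V) →ₐ[F] V →ₗ[F] V)
        ContinuousLinearMap.coe_injective x
    have hx : IsIntegral F x := .of_finite F x
    rw [irreducible_charpoly_iff, hmin, isField_adjoin_singleton_iff hx,
      finrank_adjoin_singleton hx, hd]
  have hev := eventually_irreducible_of_monic (p := fun x : V →L[F] V ↦ (x : V →ₗ[F] V).charpoly)
    (fun x ↦ x.toLinearMap.charpoly_monic) (fun x ↦ x.toLinearMap.charpoly_natDegree)
    (fun i ↦ (continuous_charpoly_coeff i).continuousAt) ((key x₀).1 ⟨hfield, hdeg⟩)
  obtain ⟨U, hU, hopen, hmem⟩ := eventually_nhds_iff.1 hev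
  exact ⟨U, hopen, hmem, fun x hx ↦ (key x).2 (hU x hx)⟩
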